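/- arXiv:1904.09849 — 3 statements merged into one kernel-verified Lean document; each statement's English description precedes it below -/
import Mathlib

section
/- Let X and Y be integrable real-valued random variables on a probability space with E[X] = 0 and E[Y] = 0, and suppose the distribution of X − Y is the Gaussian distribution on ℝ with mean 0 and variance σ², where σ ≥ 0. Then E[max(X, Y)] = σ/√(2π). -/
open MeasureTheory ProbabilityTheory

/-!
Since `max X Y = Y + (X - Y)⁺`, only the mean of the positive part of a Gaussian variable is needed.
It comes from the antiderivative `-v φ` of `(x - m) φ`, where `φ` is the density of `N(m, v)`.
-/

open Set
open scoped NNReal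

section Gaussian

variable (m : ℝ) (v : ℝ≥0)

lemma hasDerivAt_gaussianPDFReal (x : ℝ) :
    HasDerivAt (gaussianPDFReal m v) (-((x - m) / v) * gaussianPDFReal m v x) x := by
  have hexponent : HasDerivAt (fun y : ℝ ↦ -(y - m) ^ 2 / (2 * v)) (-((x - m) / v)) x := by
    have hsq := ((hasDerivAt_id' x).sub_const m).fun_pow 2
    refine (hsq.fun_neg.div_const (2 * (v : ℝ))).congr_deriv ?_
    ring
  refine (hexponent.exp.const_mul (√(2 * Real.pi * v))⁻¹).congr_deriv ?_
  rw [gaussianPDFReal]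
  ring

lemma mul_gaussianPDFReal_self : v * gaussianPDFReal m v m = √v / √(2 * Real.pi) := by
  have hpeak : gaussianPDFReal m v m = (√(2 * Real.pi) * √v)⁻¹ := by
    simp [gaussianPDFReal]
  rw [hpeak, mul_inv, mul_left_comm, ← div_eq_mul_inv, Real.div_sqrt, inv_mul_eq_div]

lemma integrable_id_gaussianReal : Integrable (fun x ↦ x) (gaussianReal m v) :=
  memLp_one_iff_integrable.mp (memLp_id_gaussianReal 1)

lemma integrable_sub_mul_gaussianPDFReal :
    Integrable fun x ↦ (x - m) * gaussianPDFReal m v x := by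
  rcases eq_or_ne v 0 with rfl | hv
  · simp
  have h : Integrable (fun x ↦ x - m) (gaussianReal m v) :=
    (integrable_id_gaussianReal m v).sub (integrable_const m)
  rw [gaussianReal_of_var_ne_zero m hv, integrable_withDensity_iff (measurable_gaussianPDF m v)
    (.of_forall fun _ ↦ gaussianPDF_lt_top)] at h
  simpa only [toReal_gaussianPDF] using h

lemma integral_Ioi_sub_mul_gaussianPDFReal (a : ℝ) :
    ∫ x in Ioi a, (x - m) * gaussianPDFReal m v x = v * gaussianPDFReal m v a := by
  rcases eq_or_ne v 0 with rfl | hv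
  · simp
  have hderiv (x : ℝ) : HasDerivAt (fun y ↦ -v * gaussianPDFReal m v y)
      ((x - m) * gaussianPDFReal m v x) x := by
    refine ((hasDerivAt_gaussianPDFReal m v x).const_mul (-v : ℝ)).congr_deriv ?_
    field_simp
  have hint := (integrable_sub_mul_gaussianPDFReal m v).integrableOn (s := Ioi a)
  have hlim := tendsto_zero_of_hasDerivAt_of_integrableOn_Ioi (fun x _ ↦ hderiv x) hint
    ((integrable_gaussianPDFReal m v).const_mul _).integrableOn
  rw [integral_Ioi_of_hasDerivAt_of_tendsto' (fun x _ ↦ hderiv x) hint hlim]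
  ring

lemma setIntegral_Ioi_sub_gaussianReal (a : ℝ) :
    ∫ x in Ioi a, (x - m) ∂gaussianReal m v = v * gaussianPDFReal m v a := by
  rcases eq_or_ne v 0 with rfl | hv
  · simp [setIntegral_dirac]
  rw [← integral_Ioi_sub_mul_gaussianPDFReal, gaussianReal_of_var_ne_zero m hv,
    setIntegral_withDensity_eq_setIntegral_toReal_smul (measurable_gaussianPDF m v)
      (.of_forall fun _ ↦ gaussianPDF_lt_top) _ measurableSet_Ioi]
  simp only [toReal_gaussianPDF, smul_eq_mul, mul_comm]

lemma integral_posPart_gaussianReal :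
    ∫ x, x⁺ ∂gaussianReal m v
      = m * (gaussianReal m v).real (Ioi 0) + v * gaussianPDFReal m v 0 := by
  have hposPart (x : ℝ) : x⁺ = (Ioi 0).indicator (fun y ↦ y) x := posPart_eq_ite_lt
  have hint := (integrable_id_gaussianReal m v).integrableOn (s := Ioi 0)
  rw [← setIntegral_Ioi_sub_gaussianReal, integral_sub hint (integrable_const m), setIntegral_const]
  simp only [hposPart, integral_indicator measurableSet_Ioi, smul_eq_mul]
  ring

end Gaussian

theorem expectation_max_of_gaussian_difference_general {Ω : Type*} [MeasurableSpace Ω]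
    {μ : Measure Ω} {X Y : Ω → ℝ} (hY : Integrable Y μ) {m : ℝ} {v : ℝ≥0}
    (hXY : μ.map (fun ω ↦ X ω - Y ω) = gaussianReal m v) :
    ∫ ω, max (X ω) (Y ω) ∂μ
      = ∫ ω, Y ω ∂μ + (m * (gaussianReal m v).real (Ioi 0) + v * gaussianPDFReal m v 0) := by
  have hlaw : HasLaw (fun ω ↦ X ω - Y ω) (gaussianReal m v) μ :=
    ⟨aemeasurable_of_map_neZero (by rw [hXY]; infer_instance), hXY⟩
  have hdiff : Integrable (fun ω ↦ X ω - Y ω) μ :=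
    (hXY ▸ integrable_id_gaussianReal m v).comp_aemeasurable hlaw.aemeasurable
  calc ∫ ω, max (X ω) (Y ω) ∂μ
    _ = ∫ ω, (Y ω + (X ω - Y ω)⁺) ∂μ := by simp only [sup_eq_add_posPart_sub]
    _ = ∫ ω, Y ω ∂μ + ∫ ω, (X ω - Y ω)⁺ ∂μ := integral_add hY hdiff.pos_part
    _ = ∫ ω, Y ω ∂μ + ∫ x, x⁺ ∂gaussianReal m v := by
      congr 1
      exact hlaw.integral_comp (f := fun x : ℝ ↦ x⁺) (by fun_prop)
    _ = _ := by rw [integral_posPart_gaussianReal]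

/-- If `X, Y` are centered integrable random variables and `X − Y` is Gaussian with mean 0 and
variance `σ²`, then `E[max(X, Y)] = σ/√(2π)`. -/
theorem expectation_max_of_gaussian_difference
    {Ω : Type*} [MeasurableSpace Ω] (μ : Measure Ω) [IsProbabilityMeasure μ]
    (X Y : Ω → ℝ) (hX : Integrable X μ) (hY : Integrable Y μ)
    (hXmean : ∫ ω, X ω ∂μ = 0) (hYmean : ∫ ω, Y ω ∂μ = 0)
    (σ : ℝ) (hσ : 0 ≤ σ)
    (hgauss : Measure.map (fun ω => X ω - Y ω) μ = gaussianReal 0 (Real.toNNReal (σ ^ 2))) :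
    ∫ ω, max (X ω) (Y ω) ∂μ = σ / Real.sqrt (2 * Real.pi) := by
  rw [expectation_max_of_gaussian_difference_general hY hgauss, hYmean, mul_gaussianPDFReal_self,
    Real.coe_toNNReal _ (sq_nonneg σ), Real.sqrt_sq hσ, zero_mul, zero_add, zero_add]
end

section
/- Let N and C be integers with 0 < C ≤ N, let z ∈ ℝ^N, and let y be the Euclidean projection of z onto the capped simplex Y, i.e., the unique point of Y minimizing ‖z − y‖. Then there exists ρ ≥ 0 such that y^n = min(1, max(0, z^n − ρ)) for every n = 1, …, N, and moreover either ρ = 0 or ∑_{n=1}^N y^n = C. -/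
/-!
Relax the linear constraint `⟪w, y⟫ ≤ c` with a multiplier `ρ ≥ 0`: completing the square, the
Lagrangian is minimised over the box by clamping `z - ρ • w` coordinatewise. As `ρ` grows, the
weight of the clamped point varies continuously and eventually drops to at most that of any given
feasible point, so either `ρ = 0` already meets the constraint or some `ρ` makes it tight. For this
`ρ`, complementary slackness turns the variational inequality of the box at `z - ρ • w` into that of
the whole feasible set at `z`, and a point satisfying the latter is the only nearest point to `z`.
-/

/-- The capped simplex: admissible cache configurations with `N` files and cache size `C`. -/
def cappedSimplex (N C : ℕ) : Set (EuclideanSpace ℝ (Fin N)) :=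
  {y | (∀ n, 0 ≤ y n ∧ y n ≤ 1) ∧ ∑ n, y n ≤ (C : ℝ)}

open Filter Set
open scoped RealInnerProductSpace

theorem eq_of_inner_sub_nonpos_of_norm_sub_le {E : Type*} [NormedAddCommGroup E]
    [InnerProductSpace ℝ E] {z p y : E} (hinner : ⟪z - p, y - p⟫ ≤ 0)
    (hnorm : ‖z - y‖ ≤ ‖z - p‖) : y = p := by
  have hexpand : ‖z - y‖ ^ 2 = ‖z - p‖ ^ 2 - 2 * ⟪z - p, y - p⟫ + ‖y - p‖ ^ 2 := by
    rw [← norm_sub_sq_real, sub_sub_sub_cancel_right]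
  have hsq : ‖z - y‖ ^ 2 ≤ ‖z - p‖ ^ 2 := by gcongr
  have hzero : ‖y - p‖ ^ 2 = 0 := le_antisymm (by linarith) (sq_nonneg _)
  simpa [sub_eq_zero] using hzero

theorem inner_sub_nonpos_of_complementary_slackness {E : Type*} [SeminormedAddCommGroup E]
    [InnerProductSpace ℝ E] {w z p y : E} {ρ c : ℝ} (hρ : 0 ≤ ρ)
    (hinner : ⟪z - ρ • w - p, y - p⟫ ≤ 0) (hy : ⟪w, y⟫ ≤ c) (hslack : ρ = 0 ∨ ⟪w, p⟫ = c) :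
    ⟪z - p, y - p⟫ ≤ 0 := by
  have hmultiplier : ρ * ⟪w, y - p⟫ ≤ 0 := by
    rcases hslack with rfl | hp
    · simp
    · exact mul_nonpos_of_nonneg_of_nonpos hρ (by rw [inner_sub_right]; linarith)
  calc
    ⟪z - p, y - p⟫ = ⟪z - ρ • w - p, y - p⟫ + ρ * ⟪w, y - p⟫ := by
      rw [← real_inner_smul_left, ← inner_add_left]
      congr 1
      abel
    _ ≤ 0 := add_nonpos hinner hmultiplier

theorem sub_clamp_mul_sub_clamp_nonpos {R : Type*} [Ring R] [LinearOrder R] [IsOrderedRing R]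
    {a b t : R} (ht : t ∈ Icc a b) (x : R) :
    (x - min b (max a x)) * (t - min b (max a x)) ≤ 0 := by
  obtain ⟨hat, htb⟩ := ht
  rcases le_total x a with hxa | hax
  · rw [max_eq_left hxa, min_eq_right (hat.trans htb)]
    exact mul_nonpos_of_nonpos_of_nonneg (sub_nonpos.2 hxa) (sub_nonneg.2 hat)
  · rw [max_eq_right hax]
    rcases le_total x b with hxb | hbx
    · simp [min_eq_right hxb]
    · rw [min_eq_left hbx]
      exact mul_nonpos_of_nonneg_of_nonpos (sub_nonneg.2 hbx) (sub_nonpos.2 htb)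

theorem mul_clamp_sub_mul_le {K : Type*} [Field K] [LinearOrder K] [IsStrictOrderedRing K]
    {a b t w x ρ : K} (ht : t ∈ Icc a b) (hρ : (x - t) / w ≤ ρ) :
    w * min b (max a (x - ρ * w)) ≤ w * t := by
  rcases lt_trichotomy w 0 with hw | rfl | hw
  · have htx : t ≤ x - ρ * w := by linarith [(div_le_iff_of_neg hw).1 hρ]
    exact mul_le_mul_of_nonpos_left (le_min ht.2 (htx.trans (le_max_right _ _))) hw.le
  · simp
  · have hxt : x - ρ * w ≤ t := by linarith [(div_le_iff₀ hw).1 hρ]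
    exact mul_le_mul_of_nonneg_left ((min_le_right _ _).trans (max_le ht.1 hxt)) hw.le

theorem exists_mem_Icc_le_and_eq_left_or_eq {α δ : Type*} [ConditionallyCompleteLinearOrder α]
    [TopologicalSpace α] [OrderTopology α] [DenselyOrdered α] [LinearOrder δ]
    [TopologicalSpace δ] [OrderClosedTopology δ] {f : α → δ} {a b : α} {c : δ} (hab : a ≤ b)
    (hf : ContinuousOn f (Icc a b)) (hb : f b ≤ c) :
    ∃ x ∈ Icc a b, f x ≤ c ∧ (x = a ∨ f x = c) := by
  rcases le_total (f a) c with ha | ha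
  · exact ⟨a, left_mem_Icc.2 hab, ha, .inl rfl⟩
  · obtain ⟨x, hx, hfx⟩ := intermediate_value_Icc' hab hf ⟨hb, ha⟩
    exact ⟨x, hx, hfx.le, .inr hfx⟩

section CappedBox

variable {ι : Type*}

/-- Coordinatewise clamping of `x` to the box `∏ n, [l n, u n]`, which is the Euclidean projection
onto the box. `Set.projIcc` is avoided because it needs a proof of `l n ≤ u n`; the value is
meaningful only under that condition. -/
noncomputable def boxClamp (l u : ι → ℝ) (x : EuclideanSpace ℝ ι) : EuclideanSpace ℝ ι :=
  WithLp.toLp 2 fun n ↦ min (u n) (max (l n) (x n))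

@[simp]
theorem boxClamp_apply (l u : ι → ℝ) (x : EuclideanSpace ℝ ι) (n : ι) :
    boxClamp l u x n = min (u n) (max (l n) (x n)) :=
  rfl

theorem boxClamp_apply_mem_Icc {l u : ι → ℝ} {n : ι} (hlu : l n ≤ u n)
    (x : EuclideanSpace ℝ ι) : boxClamp l u x n ∈ Icc (l n) (u n) :=
  ⟨le_min hlu (le_max_left _ _), min_le_left _ _⟩

theorem continuous_boxClamp (l u : ι → ℝ) : Continuous (boxClamp l u) := by
  unfold boxClamp
  fun_prop

variable [Fintype ι]

/-- The points of the box `∏ n, [l n, u n]` whose total weight `⟪w, y⟫` is at most `c`. The capped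
simplex is the case of the unit cube and unit weights. -/
def cappedBox (l u : ι → ℝ) (w : EuclideanSpace ℝ ι) (c : ℝ) : Set (EuclideanSpace ℝ ι) :=
  {y | (∀ n, y n ∈ Icc (l n) (u n)) ∧ ⟪w, y⟫ ≤ c}

theorem cappedSimplex_eq_cappedBox (N C : ℕ) :
    cappedSimplex N C = cappedBox 0 1 (WithLp.toLp 2 1) C := by
  ext y
  simp [cappedSimplex, cappedBox, PiLp.inner_apply]

variable {l u : ι → ℝ} {w y z : EuclideanSpace ℝ ι} {c : ℝ}

theorem inner_sub_boxClamp_nonpos (hy : ∀ n, y n ∈ Icc (l n) (u n)) (x : EuclideanSpace ℝ ι) :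
    ⟪x - boxClamp l u x, y - boxClamp l u x⟫ ≤ 0 := by
  rw [PiLp.inner_apply]
  refine Finset.sum_nonpos fun n _ ↦ ?_
  simpa [mul_comm] using sub_clamp_mul_sub_clamp_nonpos (hy n) (x n)

theorem eventually_inner_boxClamp_sub_smul_le (hy : ∀ n, y n ∈ Icc (l n) (u n))
    (w z : EuclideanSpace ℝ ι) :
    ∀ᶠ ρ : ℝ in atTop, ⟪w, boxClamp l u (z - ρ • w)⟫ ≤ ⟪w, y⟫ := by
  have hlarge : ∀ᶠ ρ : ℝ in atTop, ∀ n, (z n - y n) / w n ≤ ρ :=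
    eventually_all.2 fun n ↦ eventually_ge_atTop _
  filter_upwards [hlarge] with ρ hρ
  simp only [PiLp.inner_apply]
  refine Finset.sum_le_sum fun n _ ↦ ?_
  simpa [mul_comm] using mul_clamp_sub_mul_le (hy n) (hρ n)

theorem exists_multiplier_boxClamp_mem_cappedBox (hy : y ∈ cappedBox l u w c)
    (z : EuclideanSpace ℝ ι) :
    ∃ ρ : ℝ, 0 ≤ ρ ∧ boxClamp l u (z - ρ • w) ∈ cappedBox l u w c ∧
      (ρ = 0 ∨ ⟪w, boxClamp l u (z - ρ • w)⟫ = c) := by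
  obtain ⟨hbox, hcap⟩ := hy
  obtain ⟨R, hRle, hR⟩ :=
    ((eventually_inner_boxClamp_sub_smul_le hbox w z).and (eventually_ge_atTop 0)).exists
  have hcont : Continuous fun ρ : ℝ ↦ ⟪w, boxClamp l u (z - ρ • w)⟫ :=
    continuous_const.inner ((continuous_boxClamp l u).comp (by fun_prop))
  obtain ⟨ρ, hρ, hle, hslack⟩ :=
    exists_mem_Icc_le_and_eq_left_or_eq hR hcont.continuousOn (hRle.trans hcap)
  exact ⟨ρ, hρ.1, ⟨fun n ↦ boxClamp_apply_mem_Icc ((hbox n).1.trans (hbox n).2) _, hle⟩, hslack⟩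

theorem projection_cappedSimplex_soft_threshold_general (hy : y ∈ cappedBox l u w c)
    (hproj : ∀ x ∈ cappedBox l u w c, ‖z - y‖ ≤ ‖z - x‖) :
    ∃ ρ : ℝ, 0 ≤ ρ ∧ (∀ n, y n = min (u n) (max (l n) (z n - ρ * w n))) ∧
      (ρ = 0 ∨ ⟪w, y⟫ = c) := by
  obtain ⟨ρ, hρ, hmem, hslack⟩ := exists_multiplier_boxClamp_mem_cappedBox hy z
  have hinner : ⟪z - boxClamp l u (z - ρ • w), y - boxClamp l u (z - ρ • w)⟫ ≤ 0 :=
    inner_sub_nonpos_of_complementary_slackness hρ (inner_sub_boxClamp_nonpos hy.1 _) hy.2 hslack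
  have hyclamp : y = boxClamp l u (z - ρ • w) :=
    eq_of_inner_sub_nonpos_of_norm_sub_le hinner (hproj _ hmem)
  refine ⟨ρ, hρ, fun n ↦ ?_, by rwa [hyclamp]⟩
  simpa using congr($hyclamp n)

end CappedBox

/-- KKT structure of the Euclidean projection onto the capped simplex: the projection `y` of
`z` is a soft-thresholding `yⁿ = min(1, max(0, zⁿ − ρ))` for some multiplier `ρ ≥ 0`, and
either `ρ = 0` or the capacity constraint is tight, `∑ₙ yⁿ = C`. -/
theorem projection_cappedSimplex_soft_threshold
    (N C : ℕ) (hC : 0 < C) (hCN : C ≤ N)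
    (z y : EuclideanSpace ℝ (Fin N))
    (hyY : y ∈ cappedSimplex N C)
    -- y is the Euclidean projection of z onto the capped simplex
    (hproj : ∀ u ∈ cappedSimplex N C, ‖z - y‖ ≤ ‖z - u‖) :
    ∃ ρ : ℝ, 0 ≤ ρ ∧ (∀ n, y n = min 1 (max 0 (z n - ρ))) ∧
      (ρ = 0 ∨ ∑ n, y n = (C : ℝ)) := by
  rw [cappedSimplex_eq_cappedBox] at hyY hproj
  simpa [PiLp.inner_apply] using projection_cappedSimplex_soft_threshold_general hyY hproj
end

section
/- Let N and C be integers with 0 < C ≤ N, let z ∈ ℝ^N, and let y be the Euclidean projection of z onto the capped simplex Y, i.e., the unique point of Y minimizing ‖z − y‖. Then the projection preserves the ordering of coordinates: for all indices i, j, if z^i ≥ z^j then y^i ≥ y^j. -/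
/-! The projection `y` of `z` onto a convex set `K` satisfies `⟪z - y, u - y⟫ ≤ 0` for every
`u ∈ K`. If `K` is invariant under exchanging the coordinates `i` and `j`, we may take for `u` the
point `y` with these two coordinates exchanged, which gives
`((z i - y i) - (z j - y j)) * (y j - y i) ≤ 0`. When `z j ≤ z i` and `y i < y j`, both factors
are positive, a contradiction. -/

theorem inner_sub_sub_nonpos_of_isMinOn_norm_sub {E : Type*} [NormedAddCommGroup E]
    [InnerProductSpace ℝ E] {K : Set E} (hK : Convex ℝ K) {z y u : E} (hy : y ∈ K)
    (hmin : IsMinOn (fun w ↦ ‖z - w‖) K y) (hu : u ∈ K) :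
    inner ℝ (z - y) (u - y) ≤ 0 :=
  (norm_eq_iInf_iff_real_inner_le_zero hK hy).1 (hmin.iInf_eq hy).symm u hu

section Swap

variable {ι : Type*} [Fintype ι] [DecidableEq ι]

theorem piLpCongrLeft_swap_sub_self (i j : ι) (y : EuclideanSpace ℝ ι) :
    LinearIsometryEquiv.piLpCongrLeft 2 ℝ ℝ (Equiv.swap i j) y - y =
      EuclideanSpace.single i (y j - y i) - EuclideanSpace.single j (y j - y i) := by
  ext k
  rcases eq_or_ne k i with rfl | hi
  · rcases eq_or_ne k j with rfl | hj <;> simp [*]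
  · rcases eq_or_ne k j with rfl | hj <;> simp [*, Equiv.swap_apply_of_ne_of_ne]

theorem inner_piLpCongrLeft_swap_sub_self (i j : ι) (x y : EuclideanSpace ℝ ι) :
    inner ℝ x (LinearIsometryEquiv.piLpCongrLeft 2 ℝ ℝ (Equiv.swap i j) y - y) =
      (x i - x j) * (y j - y i) := by
  simp only [piLpCongrLeft_swap_sub_self, inner_sub_right, EuclideanSpace.inner_single_right,
    conj_trivial]
  ring

theorem projection_cappedSimplex_order_preserving_general {K : Set (EuclideanSpace ℝ ι)}
    (hK : Convex ℝ K) {i j : ι}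
    (hswap : Set.MapsTo (LinearIsometryEquiv.piLpCongrLeft 2 ℝ ℝ (Equiv.swap i j)) K K)
    {z y : EuclideanSpace ℝ ι} (hy : y ∈ K) (hproj : ∀ u ∈ K, ‖z - y‖ ≤ ‖z - u‖)
    (hz : z j ≤ z i) : y j ≤ y i := by
  by_contra! hlt
  have hvar := inner_sub_sub_nonpos_of_isMinOn_norm_sub hK hy (isMinOn_iff.2 hproj) (hswap hy)
  rw [inner_piLpCongrLeft_swap_sub_self] at hvar
  have hgap : 0 < (z - y) i - (z - y) j := by
    simp only [PiLp.sub_apply]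
    linarith
  exact hvar.not_gt (mul_pos hgap (sub_pos.2 hlt))

end Swap

namespace cappedSimplex

variable (N C : ℕ)

protected theorem convex : Convex ℝ (cappedSimplex N C) := by
  have hcoord (n : Fin N) : Convex ℝ {y : EuclideanSpace ℝ (Fin N) | 0 ≤ y n ∧ y n ≤ 1} :=
    (convex_Icc (0 : ℝ) 1).linear_preimage (EuclideanSpace.proj (𝕜 := ℝ) n).toLinearMap
  have hsum : Convex ℝ {y : EuclideanSpace ℝ (Fin N) | ∑ n, y n ≤ (C : ℝ)} :=
    convex_halfSpace_le ⟨by simp [Finset.sum_add_distrib], by simp [Finset.mul_sum]⟩ _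
  have hinter : cappedSimplex N C = (⋂ n, {y | 0 ≤ y n ∧ y n ≤ 1}) ∩ {y | ∑ n, y n ≤ (C : ℝ)} := by
    ext y
    simp [cappedSimplex]
  exact hinter ▸ (convex_iInter hcoord).inter hsum

theorem mapsTo_piLpCongrLeft (σ : Equiv.Perm (Fin N)) :
    Set.MapsTo (LinearIsometryEquiv.piLpCongrLeft 2 ℝ ℝ σ)
      (cappedSimplex N C) (cappedSimplex N C) :=
  fun y ⟨hbox, hsum⟩ ↦ ⟨fun n ↦ hbox (σ.symm n), (Equiv.sum_comp σ.symm y).trans_le hsum⟩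

end cappedSimplex

/-- The Euclidean projection onto the capped simplex preserves the ordering of coordinates:
if `zⁱ ≥ zʲ` then `yⁱ ≥ yʲ` for the projection `y` of `z`. -/
theorem projection_cappedSimplex_order_preserving
    (N C : ℕ) (hC : 0 < C) (hCN : C ≤ N)
    (z y : EuclideanSpace ℝ (Fin N))
    (hyY : y ∈ cappedSimplex N C)
    -- y is the Euclidean projection of z onto the capped simplex
    (hproj : ∀ u ∈ cappedSimplex N C, ‖z - y‖ ≤ ‖z - u‖) :
    ∀ i j : Fin N, z j ≤ z i → y j ≤ y i :=
  fun i j ↦ projection_cappedSimplex_order_preserving_general (cappedSimplex.convex N C)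
    (cappedSimplex.mapsTo_piLpCongrLeft N C (Equiv.swap i j)) hyY hproj
end
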